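/- arXiv:2105.14247 — 6 statements merged into one kernel-verified Lean document; each statement's English description precedes it below -/
import Mathlib

section
/- Let G be a reachability game and let T ⊆ S × S be a transition predicate. Suppose that player REACH wins from every state in Post(T). Then player REACH wins from every state in Pre(Enf(T, G)). -/
universe u

/-- A reachability game over a state type `S`. States with `isReach s` are
controlled by player REACH, the others by player SAFE. -/
structure Game (S : Type u) where
  isReach : S → Prop
  Safe : S → S → Prop
  Reach : S → S → Prop
  Init : Set S
  Goal : Set S
  safe_src : ∀ s s', Safe s s' → ¬ isReach s
  reach_src : ∀ s s', Reach s s' → isReach s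

namespace Game

variable {S : Type u}

/-- The edge relation `E = Safe ∪ Reach`. -/
def E (G : Game S) (s s' : S) : Prop := G.Safe s s' ∨ G.Reach s s'

/-- A trap state has no outgoing `E`-transition. -/
def Trap (G : Game S) (s : S) : Prop := ∀ s', ¬ G.E s s'

/-- A play: an `E`-path which is infinite (`len = ⊤`) or finite
(`len = n`) and then ends in a trap state. Values of `seq` beyond a finite
length are irrelevant. -/
structure Play (G : Game S) where
  seq : ℕ → S
  len : ℕ∞
  step : ∀ i : ℕ, (i : ℕ∞) < len → G.E (seq i) (seq (i + 1))
  fin_trap : ∀ n : ℕ, len = (n : ℕ∞) → G.Trap (seq n)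

/-- REACH wins a play if some state of the play is a goal state. -/
def ReachWinsPlay (G : Game S) (p : G.Play) : Prop :=
  ∃ k : ℕ, (k : ℕ∞) ≤ p.len ∧ p.seq k ∈ G.Goal

/-- SAFE wins a play iff REACH does not. -/
def SafeWinsPlay (G : Game S) (p : G.Play) : Prop := ¬ G.ReachWinsPlay p

/-- The list `[f 0, …, f (n-1)]`. -/
def listPrefix (f : ℕ → S) (n : ℕ) : List S := (List.range n).map f

/-- A reachability strategy: on any nonempty sequence ending in a non-trap
REACH state it chooses a `Reach`-successor. -/
def IsReachStrategy (G : Game S) (σ : List S → S) : Prop :=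
  ∀ (ω : List S) (s : S), G.isReach s → ¬ G.Trap s → G.Reach s (σ (ω ++ [s]))

/-- A safety strategy: on any nonempty sequence ending in a non-trap SAFE
state it chooses a `Safe`-successor. -/
def IsSafeStrategy (G : Game S) (σ : List S → S) : Prop :=
  ∀ (ω : List S) (s : S), ¬ G.isReach s → ¬ G.Trap s → G.Safe s (σ (ω ++ [s]))

/-- Consistency of a play with a reachability strategy. -/
def ConsistentR (G : Game S) (σ : List S → S) (p : G.Play) : Prop :=
  ∀ i : ℕ, (i : ℕ∞) < p.len → G.isReach (p.seq i) →
    p.seq (i + 1) = σ (listPrefix p.seq (i + 1))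

/-- Consistency of a play with a safety strategy. -/
def ConsistentS (G : Game S) (σ : List S → S) (p : G.Play) : Prop :=
  ∀ i : ℕ, (i : ℕ∞) < p.len → ¬ G.isReach (p.seq i) →
    p.seq (i + 1) = σ (listPrefix p.seq (i + 1))

/-- `σ` is a reachability strategy winning from `s`. -/
def WinningReachStrategyFrom (G : Game S) (σ : List S → S) (s : S) : Prop :=
  G.IsReachStrategy σ ∧
    ∀ p : G.Play, p.seq 0 = s → G.ConsistentR σ p → G.ReachWinsPlay p

/-- `σ` is a safety strategy winning from `s`. -/
def WinningSafeStrategyFrom (G : Game S) (σ : List S → S) (s : S) : Prop :=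
  G.IsSafeStrategy σ ∧
    ∀ p : G.Play, p.seq 0 = s → G.ConsistentS σ p → G.SafeWinsPlay p

/-- REACH wins from `s`. -/
def ReachWinsFrom (G : Game S) (s : S) : Prop :=
  ∃ σ : List S → S, G.WinningReachStrategyFrom σ s

/-- SAFE wins from `s`. -/
def SafeWinsFrom (G : Game S) (s : S) : Prop :=
  ∃ σ : List S → S, G.WinningSafeStrategyFrom σ s

/-- Sources of a transition predicate. -/
def Pre (T : S → S → Prop) : Set S := {s | ∃ s', T s s'}

/-- Targets of a transition predicate. -/
def Post (T : S → S → Prop) : Set S := {s' | ∃ s, T s s'}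

/-- Enforceable transitions of `T` in `G`. -/
def Enf (G : Game S) (T : S → S → Prop) (s s' : S) : Prop :=
  G.E s s' ∧ T s s' ∧ ∀ s'', G.Safe s s'' → T s s''

/-- `C` is a necessary subgoal: every play of `G` (from `Init`) reaching
`Goal` at index `n` crosses `C` at some index `k < n`. -/
def NecessarySubgoal (G : Game S) (C : S → S → Prop) : Prop :=
  ∀ p : G.Play, p.seq 0 ∈ G.Init →
    ∀ n : ℕ, (n : ℕ∞) ≤ p.len → p.seq n ∈ G.Goal →
      ∃ k < n, C (p.seq k) (p.seq (k + 1))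

/-- `ρ 0 … ρ n` is a play prefix: an `E`-path avoiding `Goal` whose last
state is not a trap state. -/
def IsPlayPrefix (G : Game S) (ρ : ℕ → S) (n : ℕ) : Prop :=
  (∀ i < n, G.E (ρ i) (ρ (i + 1))) ∧ (∀ j ≤ n, ρ j ∉ G.Goal) ∧ ¬ G.Trap (ρ n)

/-- Conformance of a play prefix with a symbolic reachability strategy. -/
def PrefixConformsR (G : Game S) (𝔖 : S → S → Prop) (ρ : ℕ → S) (n : ℕ) : Prop :=
  ∀ j < n, G.isReach (ρ j) → 𝔖 (ρ j) (ρ (j + 1))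

/-- Conformance of a play prefix with a symbolic safety strategy. -/
def PrefixConformsS (G : Game S) (𝔖 : S → S → Prop) (ρ : ℕ → S) (n : ℕ) : Prop :=
  ∀ j < n, ¬ G.isReach (ρ j) → 𝔖 (ρ j) (ρ (j + 1))

/-- A play conforms to a symbolic reachability strategy if all its play
prefixes do. -/
def PlayConformsR (G : Game S) (𝔖 : S → S → Prop) (p : G.Play) : Prop :=
  ∀ n : ℕ, (n : ℕ∞) ≤ p.len → G.IsPlayPrefix p.seq n → G.PrefixConformsR 𝔖 p.seq n

/-- A play conforms to a symbolic safety strategy if all its play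
prefixes do. -/
def PlayConformsS (G : Game S) (𝔖 : S → S → Prop) (p : G.Play) : Prop :=
  ∀ n : ℕ, (n : ℕ∞) ≤ p.len → G.IsPlayPrefix p.seq n → G.PrefixConformsS 𝔖 p.seq n

/-- `𝔖` is a winning symbolic reachability strategy from `s`. -/
def WinningSymbolicReachFrom (G : Game S) (𝔖 : S → S → Prop) (s : S) : Prop :=
  (∀ a b, 𝔖 a b → G.E a b) ∧
  (∀ p : G.Play, p.seq 0 = s → G.PlayConformsR 𝔖 p → G.ReachWinsPlay p) ∧
  (∀ (ρ : ℕ → S) (n : ℕ), ρ 0 = s → G.IsPlayPrefix ρ n → G.PrefixConformsR 𝔖 ρ n →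
      G.isReach (ρ n) → ∃ s', 𝔖 (ρ n) s' ∧ G.Reach (ρ n) s')

/-- `𝔖` is a winning symbolic safety strategy from `s`. -/
def WinningSymbolicSafeFrom (G : Game S) (𝔖 : S → S → Prop) (s : S) : Prop :=
  (∀ a b, 𝔖 a b → G.E a b) ∧
  (∀ p : G.Play, p.seq 0 = s → G.PlayConformsS 𝔖 p → G.SafeWinsPlay p) ∧
  (∀ (ρ : ℕ → S) (n : ℕ), ρ 0 = s → G.IsPlayPrefix ρ n → G.PrefixConformsS 𝔖 ρ n →
      ¬ G.isReach (ρ n) → ∃ s', 𝔖 (ρ n) s' ∧ G.Safe (ρ n) s')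

/-- Bisimulations on `G`. -/
def IsBisimulation (G : Game S) (R : S → S → Prop) : Prop :=
  ∀ s1 s2, R s1 s2 →
    ((s1 ∈ G.Goal ↔ s2 ∈ G.Goal) ∧ (s1 ∈ G.Init ↔ s2 ∈ G.Init) ∧
      (G.isReach s1 ↔ G.isReach s2)) ∧
    (∀ s1', G.E s1 s1' → ∃ s2', G.E s2 s2' ∧ R s1' s2') ∧
    (∀ s2', G.E s2 s2' → ∃ s1', G.E s1 s1' ∧ R s1' s2')

/-- The pre-game `⟨Init, Safe ∖ F, Reach ∖ F, Pre(Enf(F, G))⟩`. -/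
def preGame (G : Game S) (F : S → S → Prop) : Game S where
  isReach := G.isReach
  Safe := fun a b => G.Safe a b ∧ ¬ F a b
  Reach := fun a b => G.Reach a b ∧ ¬ F a b
  Init := G.Init
  Goal := Pre (G.Enf F)
  safe_src := fun a b h => G.safe_src a b h.1
  reach_src := fun a b h => G.reach_src a b h.1

/-- The post-game: transitions restricted to sources in `φ`. -/
def postGame (G : Game S) (φ : Set S) : Game S where
  isReach := G.isReach
  Safe := fun a b => G.Safe a b ∧ a ∈ φ
  Reach := fun a b => G.Reach a b ∧ a ∈ φ
  Init := G.Init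
  Goal := G.Goal
  safe_src := fun a b h => G.safe_src a b h.1
  reach_src := fun a b h => G.reach_src a b h.1

end Game

/-!
After the first move, to a state `t` say, REACH forgets the initial state and follows a strategy
winning from `t`, applied to the history without its first state; the tail of the play is then
consistent with that strategy. If the first move belongs to REACH, it is chosen towards a state of
`Post T`; if it belongs to SAFE, enforceability makes every available move lead there.
-/

namespace Game

variable {S : Type u} {G : Game S} {s t : S}

theorem listPrefix_succ (f : ℕ → S) (n : ℕ) :
    listPrefix f (n + 1) = f 0 :: listPrefix (fun i => f (i + 1)) n := by
  simp [listPrefix, List.range_succ_eq_map, Function.comp_def]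

theorem exists_reach_of_not_trap (hs : G.isReach s) (htrap : ¬ G.Trap s) : ∃ t, G.Reach s t := by
  simp only [Trap, not_forall, not_not] at htrap
  obtain ⟨t, hE⟩ := htrap
  exact ⟨t, hE.resolve_left fun hsafe => G.safe_src s t hsafe hs⟩

namespace Play

theorem len_ne_zero (p : G.Play) (h : ¬ G.Trap (p.seq 0)) : p.len ≠ 0 :=
  fun h0 => h (p.fin_trap 0 h0)

/-- The play without its first state. The hypothesis excludes one-state plays, for which the
truncated difference `p.len - 1` is not the length of a remaining play. -/
def tail (p : G.Play) (hp : p.len ≠ 0) : G.Play where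
  seq i := p.seq (i + 1)
  len := p.len - 1
  step i hi := p.step (i + 1) (by exact_mod_cast lt_tsub_iff_right.mp hi)
  fin_trap n hn := p.fin_trap (n + 1) (by
    rw [← tsub_add_cancel_of_le (Order.one_le_iff_ne_zero.mpr hp), hn, Nat.cast_succ])

end Play

theorem ReachWinsPlay.of_tail {p : G.Play} {hp : p.len ≠ 0}
    (h : G.ReachWinsPlay (p.tail hp)) : G.ReachWinsPlay p := by
  obtain ⟨k, hk, hgoal⟩ := h
  have hk' : (k : ℕ∞) + 1 ≤ p.len :=
    add_le_of_le_tsub_right_of_le (Order.one_le_iff_ne_zero.mpr hp) hk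
  exact ⟨k + 1, by exact_mod_cast hk', hgoal⟩

/-- The strategy that makes the first move according to `σ` and, once the second state `t` is known,
continues with `τ t` as if the play had started in `t`. -/
def switchAfterFirst (σ : List S → S) (τ : S → List S → S) : List S → S
  | _ :: t :: l => τ t (t :: l)
  | l => σ l

theorem isReachStrategy_switchAfterFirst {σ : List S → S} {τ : S → List S → S}
    (hσ : G.IsReachStrategy σ) (hτ : ∀ t, G.IsReachStrategy (τ t)) :
    G.IsReachStrategy (switchAfterFirst σ τ)
  | [], s => hσ [] s
  | [_], s => hτ s [] s
  | _ :: t :: l, s => hτ t (t :: l) s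

theorem ConsistentR.tail {σ : List S → S} {τ : S → List S → S} {p : G.Play}
    (h : G.ConsistentR (switchAfterFirst σ τ) p) (hp : p.len ≠ 0) :
    G.ConsistentR (τ (p.seq 1)) (p.tail hp) := by
  intro i hi hreach
  have hi' : ((i + 1 : ℕ) : ℕ∞) < p.len := by exact_mod_cast lt_tsub_iff_right.mp hi
  have hmove := h (i + 1) hi' hreach
  rw [listPrefix_succ, listPrefix_succ] at hmove
  rwa [listPrefix_succ]

theorem exists_isReachStrategy [Nonempty S] (G : Game S) : ∃ σ, G.IsReachStrategy σ := by
  have hmove : ∀ s, ∃ t, G.isReach s → ¬ G.Trap s → G.Reach s t := by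
    intro s
    by_cases hs : G.isReach s ∧ ¬ G.Trap s
    · exact (exists_reach_of_not_trap hs.1 hs.2).imp fun _ ht _ _ => ht
    · exact ⟨s, fun hreach htrap => absurd ⟨hreach, htrap⟩ hs⟩
  choose move hmove using hmove
  exact ⟨fun l => move (l.getLastD (Classical.arbitrary S)), fun ω s => by simpa using hmove s⟩

theorem IsReachStrategy.update [DecidableEq S] {σ : List S → S} (hσ : G.IsReachStrategy σ)
    (ω : List S) (h : G.Reach s t) :
    G.IsReachStrategy (Function.update σ (ω ++ [s]) t) := by
  intro ω' s' hreach htrap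
  by_cases heq : ω' ++ [s'] = ω ++ [s]
  · obtain rfl : s' = s := (List.append_singleton_inj.mp heq).2
    rwa [heq, Function.update_self]
  · rw [Function.update_of_ne heq]
    exact hσ ω' s' hreach htrap

theorem exists_winningReachStrategyFrom_family (G : Game S) :
    ∃ τ : S → List S → S, (∀ t, G.IsReachStrategy (τ t)) ∧
      ∀ t, G.ReachWinsFrom t → G.WinningReachStrategyFrom (τ t) t := by
  have hτ : ∀ t, ∃ σ, G.IsReachStrategy σ ∧
      (G.ReachWinsFrom t → G.WinningReachStrategyFrom σ t) := by
    intro t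
    by_cases ht : G.ReachWinsFrom t
    · exact ht.imp fun σ hσ => ⟨hσ.1, fun _ => hσ⟩
    · have : Nonempty S := ⟨t⟩
      exact G.exists_isReachStrategy.imp fun σ hσ => ⟨hσ, fun h => absurd h ht⟩
  choose τ hstrategy hwinning using hτ
  exact ⟨τ, hstrategy, hwinning⟩

theorem IsReachStrategy.reachWinsFrom_of_first_move {σ : List S → S} (hσ : G.IsReachStrategy σ)
    (hs : ¬ G.Trap s)
    (hnext : ∀ t, G.E s t → (G.isReach s → t = σ [s]) → G.ReachWinsFrom t) :
    G.ReachWinsFrom s := by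
  obtain ⟨τ, hτ, hwinning⟩ := G.exists_winningReachStrategyFrom_family
  refine ⟨switchAfterFirst σ τ, isReachStrategy_switchAfterFirst hσ hτ, ?_⟩
  rintro p rfl hconsistent
  have hlen : p.len ≠ 0 := p.len_ne_zero hs
  have hpos : ((0 : ℕ) : ℕ∞) < p.len := by exact_mod_cast pos_iff_ne_zero.mpr hlen
  have hsecond : G.ReachWinsFrom (p.seq 1) := hnext _ (p.step 0 hpos) (hconsistent 0 hpos)
  exact ((hwinning _ hsecond).2 (p.tail hlen) rfl (hconsistent.tail hlen)).of_tail

theorem ReachWinsFrom.of_reach (h : G.Reach s t) (ht : G.ReachWinsFrom t) :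
    G.ReachWinsFrom s := by
  classical
  have ⟨σ, hσ, _⟩ := ht
  refine (hσ.update [] h).reachWinsFrom_of_first_move (fun htrap => htrap t (Or.inr h)) ?_
  intro t' _ hmove
  obtain rfl : t' = t := by simpa using hmove (G.reach_src s t h)
  exact ht

theorem ReachWinsFrom.of_forall_safe (h : G.Safe s t)
    (hall : ∀ t', G.Safe s t' → G.ReachWinsFrom t') : G.ReachWinsFrom s := by
  have : Nonempty S := ⟨s⟩
  obtain ⟨σ, hσ⟩ := G.exists_isReachStrategy
  refine hσ.reachWinsFrom_of_first_move (fun htrap => htrap t (Or.inl h)) fun t' hE _ => ?_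
  exact hall t' (hE.resolve_right fun hreach => G.safe_src s t h (G.reach_src s t' hreach))

end Game

/-- If REACH wins from every state in `Post T`, then REACH wins
from every state in `Pre (Enf T G)`. -/
theorem reach_wins_from_pre_enf {S : Type u} (G : Game S) (T : S → S → Prop)
    (hPost : ∀ s' ∈ Game.Post T, G.ReachWinsFrom s') :
    ∀ s ∈ Game.Pre (G.Enf T), G.ReachWinsFrom s := by
  rintro s ⟨s', hE, hT, henforce⟩
  rcases hE with hsafe | hreach
  · exact .of_forall_safe hsafe fun t ht => hPost t ⟨s, henforce t ht⟩
  · exact .of_reach hreach (hPost s' ⟨s, hT⟩)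
end

section
/- Let G be a reachability game with Init ∩ Goal = ∅. A safety strategy σ_S is winning from every initial state of G if and only if there exists a necessary subgoal C for G such that for every play s0 s1 … of G consistent with σ_S there is no index n with (s_n, s_{n+1}) ∈ C. -/
universe u

namespace Game

variable {S : Type u} {G : Game S} {C : S → S → Prop} {p : G.Play}

/-- A play crosses the transition predicate `C` if one of its steps lies in `C`. The bound on `n`
excludes the irrelevant values of `seq` beyond the end of a finite play. -/
def Play.Crosses (p : G.Play) (C : S → S → Prop) : Prop :=
  ∃ n : ℕ, (n : ℕ∞) < p.len ∧ C (p.seq n) (p.seq (n + 1))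

/-- The transitions whose target is a goal state, the canonical necessary subgoal. The predicate
is not restricted to edges of `G`, since only steps of plays are tested against it. -/
def EntersGoal (G : Game S) (_ s' : S) : Prop := s' ∈ G.Goal

theorem NecessarySubgoal.crosses_of_reachWinsPlay (hC : G.NecessarySubgoal C)
    (hinit : p.seq 0 ∈ G.Init) (hwin : G.ReachWinsPlay p) : p.Crosses C := by
  obtain ⟨n, hn, hgoal⟩ := hwin
  obtain ⟨k, hkn, hCk⟩ := hC p hinit n hn hgoal
  exact ⟨k, (Nat.cast_lt.2 hkn).trans_le hn, hCk⟩

theorem necessarySubgoal_entersGoal (hdisj : Disjoint G.Init G.Goal) :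
    G.NecessarySubgoal G.EntersGoal := by
  rintro p hinit (_ | k) - hgoal
  · exact (hdisj.notMem_of_mem_left hinit hgoal).elim
  · exact ⟨k, k.lt_succ_self, hgoal⟩

theorem reachWinsPlay_of_crosses_entersGoal (h : p.Crosses G.EntersGoal) : G.ReachWinsPlay p := by
  obtain ⟨n, hn, hgoal⟩ := h
  exact ⟨n + 1, mod_cast Order.add_one_le_of_lt hn, hgoal⟩

theorem IsSafeStrategy.forall_mem_winningSafeStrategyFrom_iff {σ : List S → S}
    (hσ : G.IsSafeStrategy σ) {A : Set S} :
    (∀ s ∈ A, G.WinningSafeStrategyFrom σ s) ↔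
      ∀ p : G.Play, p.seq 0 ∈ A → G.ConsistentS σ p → G.SafeWinsPlay p := by
  constructor
  · exact fun hwin p hp => (hwin _ hp).2 p rfl
  · exact fun hsafe s hs => ⟨hσ, fun p hp => hsafe p (hp ▸ hs)⟩

end Game

theorem safe_strategy_winning_iff_avoids_necessary_subgoal_general {S : Type u} {G : Game S}
    (hdisj : Disjoint G.Init G.Goal) (P : G.Play → Prop) :
    (∀ p : G.Play, p.seq 0 ∈ G.Init → P p → G.SafeWinsPlay p) ↔
      ∃ C : S → S → Prop, G.NecessarySubgoal C ∧
        ∀ p : G.Play, p.seq 0 ∈ G.Init → P p → ¬ p.Crosses C := by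
  constructor
  · intro hsafe
    exact ⟨G.EntersGoal, Game.necessarySubgoal_entersGoal hdisj,
      fun p hinit hP hcross =>
        hsafe p hinit hP (Game.reachWinsPlay_of_crosses_entersGoal hcross)⟩
  · rintro ⟨C, hC, havoid⟩ p hinit hP hwin
    exact havoid p hinit hP (hC.crosses_of_reachWinsPlay hinit hwin)

/-- a safety strategy is winning from every initial state iff
there is a necessary subgoal never crossed by plays consistent with it. -/
theorem safe_strategy_winning_iff_avoids_necessary_subgoal {S : Type u}
    (G : Game S) (hdisj : G.Init ∩ G.Goal = ∅)
    (σ : List S → S) (hσ : G.IsSafeStrategy σ) :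
    (∀ s ∈ G.Init, G.WinningSafeStrategyFrom σ s) ↔
      (∃ C : S → S → Prop, G.NecessarySubgoal C ∧
        ∀ p : G.Play, p.seq 0 ∈ G.Init → G.ConsistentS σ p →
          ¬ ∃ n : ℕ, (n : ℕ∞) < p.len ∧ C (p.seq n) (p.seq (n + 1))) := by
  rw [hσ.forall_mem_winningSafeStrategyFrom_iff]
  exact safe_strategy_winning_iff_avoids_necessary_subgoal_general
    (Set.disjoint_iff_inter_eq_empty.2 hdisj) (G.ConsistentS σ)
end

section
/- Let G be a reachability game with Init ∩ Goal = ∅, and let φ ⊆ S satisfy Goal ⊆ φ and Init ∩ φ = ∅ (a semantic Craig interpolant between Init and Goal). Then the instantiation Instantiate(φ, G) = {(s, s') ∈ E | s ∉ φ and s' ∈ φ} is a necessary subgoal for G. -/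
universe u

theorem exists_lt_not_and_succ {p : ℕ → Prop} {n : ℕ} (h0 : ¬ p 0) (hn : p n) :
    ∃ k < n, ¬ p k ∧ p (k + 1) := by
  induction n with
  | zero => exact absurd hn h0
  | succ n ih =>
    by_cases hp : p n
    · obtain ⟨k, hk, hcross⟩ := ih hp
      exact ⟨k, Nat.lt_succ_of_lt hk, hcross⟩
    · exact ⟨n, n.lt_succ_self, hp, hn⟩

namespace Game

variable {S : Type u} {G : Game S} {φ : Set S}

/-- The instantiation `Instantiate(φ, G)` of a state predicate `φ` in `G`: the edges of `G`
that enter `φ` from outside, encoded as a transition predicate. -/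
def Instantiate (G : Game S) (φ : Set S) (s s' : S) : Prop :=
  G.E s s' ∧ s ∉ φ ∧ s' ∈ φ

theorem Play.exists_lt_instantiate (p : G.Play) {n : ℕ} (hlen : (n : ℕ∞) ≤ p.len)
    (h0 : p.seq 0 ∉ φ) (hn : p.seq n ∈ φ) :
    ∃ k < n, G.Instantiate φ (p.seq k) (p.seq (k + 1)) := by
  obtain ⟨k, hkn, hk, hk'⟩ := exists_lt_not_and_succ (p := fun i => p.seq i ∈ φ) h0 hn
  have hedge : G.E (p.seq k) (p.seq (k + 1)) :=
    p.step k ((Nat.cast_lt.mpr hkn).trans_le hlen)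
  exact ⟨k, hkn, hedge, hk, hk'⟩

end Game

/-- the instantiation of a semantic Craig interpolant between
`Init` and `Goal` is a necessary subgoal. -/
theorem instantiate_interpolant_necessary_subgoal {S : Type u} (G : Game S)
    (hdisj : G.Init ∩ G.Goal = ∅) (φ : Set S)
    (hGoal : G.Goal ⊆ φ) (hInit : G.Init ∩ φ = ∅) :
    G.NecessarySubgoal (fun s s' => G.E s s' ∧ s ∉ φ ∧ s' ∈ φ) := by
  intro p hp n hn hgoal
  have hstart : p.seq 0 ∉ φ :=
    Set.disjoint_left.mp (Set.disjoint_iff_inter_eq_empty.mpr hInit) hp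
  exact p.exists_lt_instantiate hn hstart (hGoal hgoal)
end

section
/- Let G be a reachability game, let φ ⊆ S, and let G_post be the reachability game obtained from G by keeping the same state set, partition and goal set Goal, and restricting both transition relations to sources in φ (i.e., transition relations Safe ∩ (φ × S) and Reach ∩ (φ × S)). If 𝔖 is a winning symbolic reachability strategy from a state s in G_post, then 𝔖 is also a winning symbolic reachability strategy from s in G. -/
universe u

/-!
Restricting the transitions to sources in `φ` turns every state outside `φ` into a trap. Hence a
goal-free conforming path of `G` from `s` cannot leave `φ`: cut at its first state outside `φ`, it
would be a conforming play of the post-game lost by REACH. Inside `φ` the two games have the same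
transitions, so the winning conditions in the post-game carry over to `G`.
-/

namespace Game

variable {S : Type u} {G : Game S} {φ : Set S} {𝔖 : S → S → Prop} {s : S} {ρ : ℕ → S} {m n : ℕ}

theorem IsPlayPrefix.mono (hρ : G.IsPlayPrefix ρ n) (hmn : m ≤ n) : G.IsPlayPrefix ρ m := by
  obtain ⟨hstep, hgoal, htrap⟩ := hρ
  refine ⟨fun i hi => hstep i (hi.trans_le hmn), fun j hj => hgoal j (hj.trans hmn), ?_⟩
  obtain rfl | hlt := hmn.eq_or_lt
  · exact htrap
  · exact fun h => h _ (hstep m hlt)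

theorem PrefixConformsR.mono (hρ : G.PrefixConformsR 𝔖 ρ n) (hmn : m ≤ n) :
    G.PrefixConformsR 𝔖 ρ m :=
  fun j hj => hρ j (hj.trans_le hmn)

theorem Play.isPlayPrefix_of_lt_len (p : G.Play) (hp : ¬ G.ReachWinsPlay p)
    (hn : (n : ℕ∞) < p.len) : G.IsPlayPrefix p.seq n := by
  refine ⟨fun i hi => p.step i ((Nat.cast_lt.2 hi).trans hn), fun j hj hgoal => ?_,
    fun htrap => htrap _ (p.step n hn)⟩
  exact hp ⟨j, (Nat.cast_le.2 hj).trans hn.le, hgoal⟩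

/-- The finite play that follows a path to a trap state. -/
def Play.ofPathToTrap (ρ : ℕ → S) (n : ℕ) (hstep : ∀ i < n, G.E (ρ i) (ρ (i + 1)))
    (htrap : G.Trap (ρ n)) : G.Play where
  seq := ρ
  len := n
  step i hi := hstep i (Nat.cast_lt.1 hi)
  fin_trap _ hk := Nat.cast_injective hk ▸ htrap

theorem e_postGame_iff {a b : S} : (G.postGame φ).E a b ↔ G.E a b ∧ a ∈ φ :=
  or_and_right.symm

theorem trap_postGame_iff {a : S} : (G.postGame φ).Trap a ↔ (a ∈ φ → G.Trap a) := by
  simp only [Trap, e_postGame_iff, not_and']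
  exact forall_comm

theorem isPlayPrefix_postGame_iff :
    (G.postGame φ).IsPlayPrefix ρ n ↔ G.IsPlayPrefix ρ n ∧ ∀ i ≤ n, ρ i ∈ φ := by
  simp only [IsPlayPrefix, e_postGame_iff, trap_postGame_iff, Classical.not_imp]
  constructor
  · rintro ⟨hstep, hgoal, hmem, htrap⟩
    refine ⟨⟨fun i hi => (hstep i hi).1, hgoal, htrap⟩, fun i hi => ?_⟩
    obtain rfl | hlt := hi.eq_or_lt
    · exact hmem
    · exact (hstep i hlt).2
  · rintro ⟨⟨hstep, hgoal, htrap⟩, hmem⟩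
    exact ⟨fun i hi => ⟨hstep i hi, hmem i hi.le⟩, hgoal, hmem n le_rfl, htrap⟩

/-- A play of `G` regarded as a play of the post-game. The last state of a finite play has no
successor in `G`, so it need not lie in `φ`. -/
def Play.toPostGame (p : G.Play) (hp : ∀ i : ℕ, (i : ℕ∞) < p.len → p.seq i ∈ φ) :
    (G.postGame φ).Play where
  seq := p.seq
  len := p.len
  step i hi := e_postGame_iff.2 ⟨p.step i hi, hp i hi⟩
  fin_trap k hk := trap_postGame_iff.2 fun _ => p.fin_trap k hk

theorem PlayConformsR.toPostGame {p : G.Play} (hconf : G.PlayConformsR 𝔖 p)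
    (hp : ∀ i : ℕ, (i : ℕ∞) < p.len → p.seq i ∈ φ) :
    (G.postGame φ).PlayConformsR 𝔖 (p.toPostGame hp) :=
  fun k hk hpre => hconf k hk (isPlayPrefix_postGame_iff.1 hpre).1

theorem WinningSymbolicReachFrom.mem_of_isPlayPrefix
    (h : (G.postGame φ).WinningSymbolicReachFrom 𝔖 s) (h0 : ρ 0 = s)
    (hρ : G.IsPlayPrefix ρ n) (hconf : G.PrefixConformsR 𝔖 ρ n) : ρ n ∈ φ := by
  induction n using Nat.strong_induction_on with
  | _ n ih =>
    by_contra hn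
    have hstep : ∀ i < n, (G.postGame φ).E (ρ i) (ρ (i + 1)) := fun i hi =>
      e_postGame_iff.2 ⟨hρ.1 i hi, ih i hi (hρ.mono hi.le) (hconf.mono hi.le)⟩
    have htrap : (G.postGame φ).Trap (ρ n) := trap_postGame_iff.2 fun hmem => absurd hmem hn
    obtain ⟨k, hk, hgoal⟩ := h.2.1 (.ofPathToTrap ρ n hstep htrap) h0
      fun m hm _ => hconf.mono (Nat.cast_le.1 hm)
    exact hρ.2.1 k (Nat.cast_le.1 hk) hgoal

end Game

/-- a winning symbolic reachability strategy in the post-game is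
also winning in `G`. -/
theorem winning_symbolic_of_postGame {S : Type u} (G : Game S) (φ : Set S)
    (𝔖 : S → S → Prop) (s : S)
    (h : (G.postGame φ).WinningSymbolicReachFrom 𝔖 s) :
    G.WinningSymbolicReachFrom 𝔖 s := by
  refine ⟨fun a b hab => (Game.e_postGame_iff.1 (h.1 a b hab)).1, fun p h0 hp => ?_,
    fun ρ n h0 hρ hconf hreach => ?_⟩
  · by_contra hlost
    have hmem : ∀ i : ℕ, (i : ℕ∞) < p.len → p.seq i ∈ φ := fun i hi =>
      have hpre := p.isPlayPrefix_of_lt_len hlost hi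
      h.mem_of_isPlayPrefix h0 hpre (hp i hi.le hpre)
    exact hlost (h.2.1 (p.toPostGame hmem) h0 (hp.toPostGame hmem))
  · have hmem : ∀ i ≤ n, ρ i ∈ φ := fun i hi =>
      h.mem_of_isPlayPrefix h0 (hρ.mono hi) (hconf.mono hi)
    have hpost := Game.isPlayPrefix_postGame_iff.2 ⟨hρ, hmem⟩
    obtain ⟨s', h𝔖, hReach, _⟩ := h.2.2 ρ n h0 hpost hconf hreach
    exact ⟨s', h𝔖, hReach⟩
end

section
/- Let G, G_T and G_F be reachability games over the same state set S and the same partition into S_SAFE and S_REACH, with transition relations (Safe, Reach), (Safe_T, Reach_T) and (Safe_F, Reach_F) respectively. Let T, F ⊆ S × S be transition predicates such that Pre(T) ∩ Pre(F) = ∅, T ⊆ Safe_T ∪ Reach_T ⊆ Safe ∪ Reach, F ⊆ Safe_F ∪ Reach_F ⊆ Safe ∪ Reach, Enf(T, G_T) = ∅ and Enf(F, G_F) = ∅. Then Enf(T ∪ F, G) = ∅. -/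
universe u

/-!
Suppose SAFE's moves from `a` in `G` are all covered by `T ∪ F`, with `(a, b) ∈ T`. Since
`a ∉ Pre F`, they are all covered by `T` alone. SAFE's moves in the subgame for
`T` are among her moves in `G`, so `(a, b)` is enforceable there. The case `(a, b) ∈ F` is
symmetric.
-/

namespace Game

variable {S : Type u} {G H : Game S} {T F : S → S → Prop} {a b : S}

theorem E.safe_of_not_isReach (h : G.E a b) (ha : ¬ G.isReach a) : G.Safe a b :=
  h.resolve_right fun hReach => ha (G.reach_src a b hReach)

theorem safe_subset_of_E_subset (hpart : G.isReach ≤ H.isReach)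
    (hE : ∀ s s', H.E s s' → G.E s s') : ∀ s s', H.Safe s s' → G.Safe s s' :=
  fun s s' h => (hE s s' (.inl h)).safe_of_not_isReach fun hs => H.safe_src s s' h (hpart s hs)

theorem Enf.of_safe_subset (h : G.Enf T a b) (hE : H.E a b)
    (hSafe : ∀ c, H.Safe a c → G.Safe a c) : H.Enf T a b :=
  ⟨hE, h.2.1, fun c hc => h.2.2 c (hSafe c hc)⟩

theorem Enf.left_of_notMem_pre (h : G.Enf (fun x y => T x y ∨ F x y) a b) (ha : a ∉ Pre F) :
    G.Enf T a b :=
  have hF (c : S) : ¬ F a c := fun hac => ha ⟨c, hac⟩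
  ⟨h.1, h.2.1.resolve_right (hF b), fun c hc => (h.2.2 c hc).resolve_right (hF c)⟩

theorem Enf.right_of_notMem_pre (h : G.Enf (fun x y => T x y ∨ F x y) a b) (ha : a ∉ Pre T) :
    G.Enf F a b :=
  Enf.left_of_notMem_pre (by simpa only [or_comm] using h) ha

end Game

theorem enf_union_empty_general {S : Type u} {G GT GF : Game S} {T F : S → S → Prop}
    (hdisj : Disjoint (Game.Pre T) (Game.Pre F))
    (hT : ∀ a b, T a b → GT.E a b) (hSafeT : ∀ a b, GT.Safe a b → G.Safe a b)
    (hF : ∀ a b, F a b → GF.E a b) (hSafeF : ∀ a b, GF.Safe a b → G.Safe a b)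
    (hET : ∀ a b, ¬ GT.Enf T a b) (hEF : ∀ a b, ¬ GF.Enf F a b) :
    ∀ a b, ¬ G.Enf (fun x y => T x y ∨ F x y) a b := by
  intro a b h
  rcases h.2.1 with hab | hab
  · have ha : a ∉ Game.Pre F := hdisj.notMem_of_mem_left ⟨b, hab⟩
    exact hET a b ((h.left_of_notMem_pre ha).of_safe_subset (hT a b hab) (hSafeT a))
  · have ha : a ∉ Game.Pre T := hdisj.notMem_of_mem_right ⟨b, hab⟩
    exact hEF a b ((h.right_of_notMem_pre ha).of_safe_subset (hF a b hab) (hSafeF a))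

/-- unavoidability is preserved under disjoint union of
subgoals coming from subgames. -/
theorem enf_union_empty {S : Type u} (G GT GF : Game S)
    (hpartT : GT.isReach = G.isReach) (hpartF : GF.isReach = G.isReach)
    (T F : S → S → Prop)
    (hdisj : Game.Pre T ∩ Game.Pre F = ∅)
    (hT1 : ∀ a b, T a b → GT.E a b) (hT2 : ∀ a b, GT.E a b → G.E a b)
    (hF1 : ∀ a b, F a b → GF.E a b) (hF2 : ∀ a b, GF.E a b → G.E a b)
    (hET : ∀ a b, ¬ GT.Enf T a b) (hEF : ∀ a b, ¬ GF.Enf F a b) :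
    ∀ a b, ¬ G.Enf (fun x y => T x y ∨ F x y) a b :=
  enf_union_empty_general (Set.disjoint_iff_inter_eq_empty.mpr hdisj)
    hT1 (Game.safe_subset_of_E_subset hpartT.ge hT2)
    hF1 (Game.safe_subset_of_E_subset hpartF.ge hF2) hET hEF
end

section
/- Let G be a reachability game and let ∼ be a bisimulation on G that is also an equivalence relation on S. Let φ1, φ2 ⊆ S be unions of ∼-equivalence classes (i.e., closed under ∼), and let T = {(s, s') ∈ S × S | s ∈ φ1 and s' ∈ φ2}. Then Pre(Enf(T, G)) is a union of ∼-equivalence classes: if s1 ∼ s2 and s1 ∈ Pre(Enf(T, G)), then s2 ∈ Pre(Enf(T, G)). -/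
universe u

namespace Game

variable {S : Type u} {G : Game S} {R T : S → S → Prop} {s₁ s₁' s₂ s₂' : S}

theorem E.safe_of_not_isReach_s14 (h : G.E s₁ s₁') (hs : ¬ G.isReach s₁) : G.Safe s₁ s₁' :=
  h.resolve_right fun hReach => hs (G.reach_src _ _ hReach)

namespace IsBisimulation

theorem exists_safe_left (hR : G.IsBisimulation R) (hs : R s₁ s₂) (h : G.Safe s₂ s₂') :
    ∃ s₁', G.Safe s₁ s₁' ∧ R s₁' s₂' := by
  obtain ⟨⟨-, -, isReach_iff⟩, -, back⟩ := hR s₁ s₂ hs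
  obtain ⟨s₁', hE, hSucc⟩ := back s₂' (Or.inl h)
  have not_isReach : ¬ G.isReach s₁ := mt isReach_iff.mp (G.safe_src _ _ h)
  exact ⟨s₁', hE.safe_of_not_isReach_s14 not_isReach, hSucc⟩

-- The chosen edge is matched forwards, whereas the SAFE moves at `s₂` are pulled back to `s₁`.
theorem exists_enf_right (hR : G.IsBisimulation R)
    (hT : ∀ ⦃a b⦄, R a b → ∀ ⦃a' b'⦄, R a' b' → T a a' → T b b')
    (hs : R s₁ s₂) (h : G.Enf T s₁ s₁') : ∃ s₂', G.Enf T s₂ s₂' ∧ R s₁' s₂' := by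
  obtain ⟨hE, hTs, hSafe⟩ := h
  obtain ⟨-, forth, -⟩ := hR s₁ s₂ hs
  obtain ⟨s₂', hE₂, hSucc⟩ := forth s₁' hE
  refine ⟨s₂', ⟨hE₂, hT hs hSucc hTs, fun t₂ ht₂ => ?_⟩, hSucc⟩
  obtain ⟨t₁, ht₁, ht⟩ := hR.exists_safe_left hs ht₂
  exact hT hs ht (hSafe t₁ ht₁)

end IsBisimulation

end Game

theorem pre_enf_closed_under_bisim_general {S : Type u} {G : Game S} {R T : S → S → Prop}
    (hR : G.IsBisimulation R)
    (hT : ∀ ⦃a b⦄, R a b → ∀ ⦃a' b'⦄, R a' b' → T a a' → T b b')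
    {s₁ s₂ : S} (hs : R s₁ s₂) (h : s₁ ∈ Game.Pre (G.Enf T)) : s₂ ∈ Game.Pre (G.Enf T) := by
  obtain ⟨s₁', hEnf⟩ := h
  obtain ⟨s₂', hEnf₂, -⟩ := hR.exists_enf_right hT hs hEnf
  exact ⟨s₂', hEnf₂⟩

/-- for `T = φ1 × φ2` with `φ1, φ2` unions of bisimulation
classes, `Pre(Enf(T, G))` is a union of bisimulation classes. -/
theorem pre_enf_closed_under_bisim {S : Type u} (G : Game S)
    (R : S → S → Prop) (hBisim : G.IsBisimulation R) (hEquiv : Equivalence R)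
    (φ1 φ2 : Set S)
    (hφ1 : ∀ a b, R a b → (a ∈ φ1 ↔ b ∈ φ1))
    (hφ2 : ∀ a b, R a b → (a ∈ φ2 ↔ b ∈ φ2))
    (s1 s2 : S) (hs : R s1 s2)
    (h1 : s1 ∈ Game.Pre (G.Enf (fun a b => a ∈ φ1 ∧ b ∈ φ2))) :
    s2 ∈ Game.Pre (G.Enf (fun a b => a ∈ φ1 ∧ b ∈ φ2)) :=
  pre_enf_closed_under_bisim_general hBisim
    (fun a b hab a' b' hab' => And.imp (hφ1 a b hab).mp (hφ2 a' b' hab').mp) hs h1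
end
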